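/- Assume 0 < τ, σ_min ≤ τ < (σ_min + σ_min,2)/2, and let r ∈ ℝ^{M+N} satisfy Π r = r. Set j₀ = min{1, M−N}. Then σ₁ = σ_min, and for every j ≥ j₀ there exists w ∈ K_j(B₁, r) such that ‖B₁ w + r‖ ≤ 2 · (σ_max/τ)^{j₀} · (1 − 2/(1 + √((σ_max² − τ²)/(σ_min,2² − τ²))))^{⌊(j−j₀)/2⌋} · ‖r‖, where ⌊·⌋ denotes the integer part. -/

import Mathlib

open Matrix

noncomputable def vnorm {ι : Type*} [Fintype ι] (x : ι → ℝ) : ℝ :=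
  Real.sqrt (∑ i, x i ^ 2)

noncomputable def Krylov {ι : Type*} [Fintype ι] [DecidableEq ι]
    (B : Matrix ι ι ℝ) (r : ι → ℝ) (j : ℕ) : Submodule ℝ (ι → ℝ) :=
  Submodule.span ℝ {x | ∃ i < j, x = (B ^ i) *ᵥ r}

/-!
If `p` has degree at most `j` and `p 0 = 1`, then `p(B₁) r` has the form `B₁ w + r` with `w` in the
`j`-th Krylov space, and by the spectral theorem its norm is at most `‖r‖` times the maximum of
`|p|` over those eigenvalues of `B₁` that have an eigenvector not orthogonal to `r`.

The matrix `B + τ` is the Jordan–Wielandt matrix of `A`: its eigenvectors are the pairs `(a, b)`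
with `A b = μ a` and `Aᵀ a = μ b`. Pairs belonging to values with different squares are
orthogonal in each block, and `Π` commutes with `B` and removes the first singular pair, so the
relevant eigenvalues `l` of `B₁` satisfy `(l + τ)² = σᵢ²` with `i ≠ 1`, or `l = -τ`, the latter
only when `M > N`. The substitution `l ↦ (l + τ)² - τ²` fixes `0` and folds the two symmetric
branches `l + τ = ±σᵢ` onto the single interval `[σ_min,2² - τ², σ_max² - τ²]`, on which a scaled
Chebyshev polynomial is small; when `M > N`, an extra factor `1 + l / τ` kills the eigenvalue `-τ`.
-/

section ResidualPolynomial

open Polynomial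

/-- The residual polynomials of a `j`-step Krylov method: the polynomials `p` of degree at most `j`
with `p 0 = 1`. These are the `p` for which `p(B) r` is the residual of an iterate in the `j`-th
Krylov space. -/
structure IsResidualPolynomial {R : Type*} [CommSemiring R] (p : R[X]) (j : ℕ) : Prop where
  natDegree_le : p.natDegree ≤ j
  eval_zero : p.eval 0 = 1

namespace IsResidualPolynomial

variable {R : Type*} [CommSemiring R] {p q : R[X]} {j k : ℕ}

theorem mono (hp : IsResidualPolynomial p j) (hjk : j ≤ k) : IsResidualPolynomial p k :=
  ⟨hp.natDegree_le.trans hjk, hp.eval_zero⟩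

theorem mul (hp : IsResidualPolynomial p j) (hq : IsResidualPolynomial q k) :
    IsResidualPolynomial (p * q) (j + k) :=
  ⟨natDegree_mul_le_of_le hp.natDegree_le hq.natDegree_le,
    by rw [eval_mul, hp.eval_zero, hq.eval_zero, mul_one]⟩

theorem pow (hp : IsResidualPolynomial p j) (n : ℕ) : IsResidualPolynomial (p ^ n) (n * j) :=
  ⟨natDegree_pow_le_of_le n hp.natDegree_le, by rw [eval_pow, hp.eval_zero, one_pow]⟩

theorem comp (hp : IsResidualPolynomial p j) (hq : q.natDegree ≤ k) (hq0 : q.eval 0 = 0) :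
    IsResidualPolynomial (p.comp q) (j * k) :=
  ⟨natDegree_comp_le.trans (Nat.mul_le_mul hp.natDegree_le hq),
    by rw [eval_comp, hq0, hp.eval_zero]⟩

end IsResidualPolynomial

theorem isResidualPolynomial_one_sub_C_mul_X {R : Type*} [CommRing R] (c : R) :
    IsResidualPolynomial (1 - C c * X) 1 :=
  ⟨by compute_degree, by simp⟩

theorem eval_T_half_add_inv {x : ℝ} (hx : 0 < x) (n : ℕ) :
    (Chebyshev.T ℝ n).eval ((x + x⁻¹) / 2) = (x ^ n + (x ^ n)⁻¹) / 2 := by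
  rw [← Real.cosh_log hx, Chebyshev.T_real_cosh, Int.cast_natCast, ← Real.log_pow,
    Real.cosh_log (pow_pos hx n)]

theorem exists_residualPolynomial_abs_eval_le_inv_eval_T {a b : ℝ} (ha : 0 < a) (hab : a < b)
    (k : ℕ) :
    ∃ p : ℝ[X], IsResidualPolynomial p k ∧ ∀ x ∈ Set.Icc a b,
      |p.eval x| ≤ ((Chebyshev.T ℝ k).eval ((b + a) / (b - a)))⁻¹ := by
  have hba : 0 < b - a := sub_pos.mpr hab
  set t := (Chebyshev.T ℝ k).eval ((b + a) / (b - a)) with ht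
  have ht0 : 0 < t := zero_lt_one.trans_le <|
    Chebyshev.one_le_eval_T_real k <| (one_le_div hba).mpr (by linarith)
  set q : ℝ[X] := C ((b + a) / (b - a)) - C (2 / (b - a)) * X with hq
  have hq_eval (x : ℝ) : q.eval x = (b + a - 2 * x) / (b - a) := by
    simp only [hq, eval_sub, eval_mul, eval_C, eval_X]
    ring
  have hq_deg : q.natDegree ≤ 1 := by
    rw [hq]
    compute_degree
  refine ⟨C t⁻¹ * (Chebyshev.T ℝ k).comp q, ⟨?_, ?_⟩, fun x hx ↦ ?_⟩
  · calc (C t⁻¹ * (Chebyshev.T ℝ k).comp q).natDegree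
        ≤ (Chebyshev.T ℝ k).natDegree * q.natDegree :=
          (natDegree_C_mul_le _ _).trans natDegree_comp_le
      _ ≤ k * 1 := Nat.mul_le_mul (by rw [Chebyshev.natDegree_T, Int.natAbs_natCast]) hq_deg
      _ = k := mul_one k
  · rw [eval_mul, eval_C, eval_comp, hq_eval, mul_zero, sub_zero, ← ht, inv_mul_cancel₀ ht0.ne']
  · have hqx : |q.eval x| ≤ 1 := by
      rw [hq_eval, abs_le, le_div_iff₀ hba, div_le_iff₀ hba]
      constructor <;> linarith [hx.1, hx.2]
    rw [eval_mul, eval_C, eval_comp, abs_mul, abs_of_pos (inv_pos.mpr ht0)]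
    exact mul_le_of_le_one_right (inv_nonneg.mpr ht0.le)
      (Chebyshev.abs_eval_T_real_le_one k hqx)

theorem inv_eval_T_le_two_mul_pow {a b : ℝ} (ha : 0 < a) (hab : a < b) (k : ℕ) :
    ((Chebyshev.T ℝ k).eval ((b + a) / (b - a)))⁻¹ ≤ 2 * (1 - 2 / (1 + √(b / a))) ^ k := by
  set s := √(b / a) with hs
  have hs1 : 1 < s := by
    rwa [hs, Real.lt_sqrt zero_le_one, one_pow, one_lt_div ha]
  have hb : b = s ^ 2 * a := by
    rw [hs, Real.sq_sqrt (div_nonneg (ha.trans hab).le ha.le), div_mul_cancel₀ _ ha.ne']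
  set ρ := 1 - 2 / (1 + s) with hρ
  have hρ_eq : ρ = (s - 1) / (s + 1) := by
    rw [hρ]
    field_simp
    ring
  have hρ0 : 0 < ρ := by
    rw [hρ_eq]
    exact div_pos (by linarith) (by linarith)
  have harg : (b + a) / (b - a) = (ρ + ρ⁻¹) / 2 := by
    have hs_sub : s - 1 ≠ 0 := by linarith
    have hs_add : s + 1 ≠ 0 := by linarith
    rw [hρ_eq, hb, show s ^ 2 * a - a = (s - 1) * (s + 1) * a by ring]
    field_simp
    ring
  have hρk : 0 < ρ ^ k := pow_pos hρ0 k
  rw [harg, eval_T_half_add_inv hρ0]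
  refine inv_le_of_inv_le₀ (by positivity) ?_
  rw [mul_inv]
  linarith

theorem exists_residualPolynomial_abs_eval_le {a b : ℝ} (ha : 0 < a) (hab : a ≤ b) (k : ℕ) :
    ∃ p : ℝ[X], IsResidualPolynomial p k ∧ ∀ x ∈ Set.Icc a b,
      |p.eval x| ≤ 2 * (1 - 2 / (1 + √(b / a))) ^ k := by
  rcases hab.eq_or_lt with rfl | hlt
  · refine ⟨(1 - C a⁻¹ * X) ^ k,
      ((isResidualPolynomial_one_sub_C_mul_X a⁻¹).pow k).mono (mul_one k).le, fun x hx ↦ ?_⟩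
    obtain rfl : x = a := le_antisymm hx.2 hx.1
    have hrate : 1 - 2 / (1 + √(x / x)) = 0 := by
      rw [div_self ha.ne', Real.sqrt_one]
      norm_num
    have hroot : (1 - C x⁻¹ * X).eval x = 0 := by simp [ha.ne']
    rw [eval_pow, hroot, hrate, abs_of_nonneg (by positivity)]
    linarith [pow_nonneg (le_refl (0 : ℝ)) k]
  · obtain ⟨p, hp, hbound⟩ := exists_residualPolynomial_abs_eval_le_inv_eval_T ha hlt k
    exact ⟨p, hp, fun x hx ↦ (hbound x hx).trans (inv_eval_T_le_two_mul_pow ha hlt k)⟩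

theorem exists_residualPolynomial_abs_eval_le_of_shift {τ α β : ℝ} (hτ : 0 < τ) (hτα : τ < α)
    (hαβ : α ≤ β) {d j : ℕ} (hdj : d ≤ j) :
    ∃ p : ℝ[X], IsResidualPolynomial p j ∧ (d ≠ 0 → p.eval (-τ) = 0) ∧
      ∀ l, |l + τ| ∈ Set.Icc α β → |p.eval l| ≤
        2 * (β / τ) ^ d *
          (1 - 2 / (1 + √((β ^ 2 - τ ^ 2) / (α ^ 2 - τ ^ 2)))) ^ ((j - d) / 2) := by
  have hα : 0 < α ^ 2 - τ ^ 2 := sub_pos.mpr (pow_lt_pow_left₀ hτα hτ.le two_ne_zero)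
  have hαβ' : α ^ 2 - τ ^ 2 ≤ β ^ 2 - τ ^ 2 :=
    sub_le_sub_right (pow_le_pow_left₀ (hτ.trans hτα).le hαβ 2) _
  obtain ⟨g, hg, hg_bound⟩ := exists_residualPolynomial_abs_eval_le hα hαβ' ((j - d) / 2)
  set fold : ℝ[X] := (X + C τ) ^ 2 - C (τ ^ 2) with hfold
  have hfold_eval (l : ℝ) : fold.eval l = (l + τ) ^ 2 - τ ^ 2 := by simp [hfold]
  have hfold_deg : fold.natDegree ≤ 2 := by
    rw [hfold]
    compute_degree
  set kill : ℝ[X] := 1 - C (-τ⁻¹) * X with hkill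
  have hkill_eval (l : ℝ) : kill.eval l = (l + τ) / τ := by
    simp only [hkill, eval_sub, eval_one, eval_mul, eval_C, eval_X]
    field_simp
    ring
  refine ⟨kill ^ d * g.comp fold, ?_, fun hd ↦ ?_, fun l hl ↦ ?_⟩
  · exact (((isResidualPolynomial_one_sub_C_mul_X _).pow d).mul
      (hg.comp hfold_deg (by rw [hfold_eval]; ring))).mono (by omega)
  · rw [eval_mul, eval_pow, hkill_eval, neg_add_cancel, zero_div, zero_pow hd, zero_mul]
  · have hkill_le : |kill.eval l| ≤ β / τ := by
      rw [hkill_eval, abs_div, abs_of_pos hτ]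
      exact div_le_div_of_nonneg_right hl.2 hτ.le
    have hfold_mem : fold.eval l ∈ Set.Icc (α ^ 2 - τ ^ 2) (β ^ 2 - τ ^ 2) := by
      rw [hfold_eval, ← sq_abs (l + τ)]
      exact ⟨sub_le_sub_right (pow_le_pow_left₀ (hτ.trans hτα).le hl.1 2) _,
        sub_le_sub_right (pow_le_pow_left₀ (abs_nonneg _) hl.2 2) _⟩
    rw [eval_mul, eval_pow, eval_comp, abs_mul, abs_pow, mul_comm 2, mul_assoc]
    exact mul_le_mul (pow_le_pow_left₀ (abs_nonneg _) hkill_le d) (hg_bound _ hfold_mem)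
      (abs_nonneg _) (pow_nonneg ((abs_nonneg _).trans hkill_le) d)

end ResidualPolynomial

section Krylov

open Polynomial

variable {ι : Type*} [Fintype ι]

theorem vnorm_eq_norm_toLp (x : ι → ℝ) : vnorm x = ‖WithLp.toLp 2 x‖ := by
  simp [vnorm, EuclideanSpace.norm_eq]

variable [DecidableEq ι]

theorem dotProduct_pow_mulVec_of_isSymm {R : Type*} [CommSemiring R] {H : Matrix ι ι R}
    (hH : H.IsSymm) {l : R} {x : ι → R} (hx : H *ᵥ x = l • x) (n : ℕ) (r : ι → R) :
    x ⬝ᵥ (H ^ n *ᵥ r) = l ^ n * (x ⬝ᵥ r) := by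
  induction n with
  | zero => rw [pow_zero, pow_zero, one_mulVec, one_mul]
  | succ n ih =>
    rw [pow_succ', ← mulVec_mulVec, dotProduct_mulVec, ← mulVec_transpose, hH.eq, hx,
      smul_dotProduct, ih, smul_eq_mul, pow_succ', mul_assoc]

theorem dotProduct_aeval_mulVec_of_isSymm {R : Type*} [CommSemiring R] {H : Matrix ι ι R}
    (hH : H.IsSymm) {l : R} {x : ι → R} (hx : H *ᵥ x = l • x) (p : R[X]) (r : ι → R) :
    x ⬝ᵥ (aeval H p *ᵥ r) = p.eval l * (x ⬝ᵥ r) := by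
  induction p using Polynomial.induction_on' with
  | add p q hp hq => rw [map_add, add_mulVec, dotProduct_add, hp, hq, eval_add, add_mul]
  | monomial n a =>
    rw [aeval_monomial, eval_monomial, ← Algebra.smul_def, smul_mulVec, dotProduct_smul,
      dotProduct_pow_mulVec_of_isSymm hH hx, smul_eq_mul, mul_assoc]

theorem vnorm_aeval_mulVec_le {H : Matrix ι ι ℝ} (hH : H.IsSymm) (p : ℝ[X]) (r : ι → ℝ) {c : ℝ}
    (hc : 0 ≤ c)
    (hp : ∀ (l : ℝ) (x : ι → ℝ), H *ᵥ x = l • x → x ⬝ᵥ r ≠ 0 → |p.eval l| ≤ c) :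
    vnorm (aeval H p *ᵥ r) ≤ c * vnorm r := by
  have hherm : H.IsHermitian := by
    rw [IsHermitian, conjTranspose_eq_transpose_of_trivial, hH.eq]
  let e := hherm.eigenvectorBasis
  have hinner (i : ι) (y : ι → ℝ) : inner ℝ (e i) (WithLp.toLp 2 y) = ⇑(e i) ⬝ᵥ y := by
    simp [PiLp.inner_apply, dotProduct, mul_comm]
  rw [vnorm_eq_norm_toLp, vnorm_eq_norm_toLp]
  refine le_of_sq_le_sq ?_ (by positivity)
  rw [mul_pow, ← e.sum_sq_norm_inner_right, ← e.sum_sq_norm_inner_right, Finset.mul_sum]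
  refine Finset.sum_le_sum fun i _ ↦ ?_
  have heig : H *ᵥ ⇑(e i) = hherm.eigenvalues i • ⇑(e i) := hherm.mulVec_eigenvectorBasis i
  rw [hinner, hinner, dotProduct_aeval_mulVec_of_isSymm hH heig, norm_mul, mul_pow]
  by_cases hir : ⇑(e i) ⬝ᵥ r = 0
  · simp [hir]
  · gcongr
    exact hp _ _ heig hir

theorem aeval_mulVec_mem_Krylov (H : Matrix ι ι ℝ) (r : ι → ℝ) {p : ℝ[X]} {j : ℕ}
    (hp : p.degree < j) : aeval H p *ᵥ r ∈ Krylov H r j := by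
  rw [aeval_def, eval₂_eq_sum, Polynomial.sum, sum_mulVec]
  refine Submodule.sum_mem _ fun i hi ↦ ?_
  have hij : i < j := by exact_mod_cast (le_degree_of_mem_supp i hi).trans_lt hp
  rw [← Algebra.smul_def, smul_mulVec]
  exact Submodule.smul_mem _ _ (Submodule.subset_span ⟨i, hij, rfl⟩)

theorem IsResidualPolynomial.exists_mem_Krylov {p : ℝ[X]} {j : ℕ}
    (hp : IsResidualPolynomial p j) (H : Matrix ι ι ℝ) (r : ι → ℝ) :
    ∃ w ∈ Krylov H r j, H *ᵥ w + r = aeval H p *ᵥ r := by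
  have hp0 : p ≠ 0 := by
    rintro rfl
    simpa using hp.eval_zero
  refine ⟨aeval H p.divX *ᵥ r, aeval_mulVec_mem_Krylov H r ?_, ?_⟩
  · exact (degree_divX_lt hp0).trans_le (natDegree_le_iff_degree_le.mp hp.natDegree_le)
  · conv_rhs => rw [← X_mul_divX_add p]
    rw [map_add, map_mul, aeval_X, aeval_C, coeff_zero_eq_eval_zero, hp.eval_zero, map_one,
      add_mulVec, one_mulVec, mulVec_mulVec]

end Krylov

section Deflation

variable {R : Type*} [CommRing R] {m n ι : Type*}

section Symmetry

variable [DecidableEq m] [DecidableEq n]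

/-- The Jordan–Wielandt matrix `[[0, A], [Aᵀ, 0]]` shifted by `-τ`: the matrix `B` of the JDSVD
correction equation. -/
def shiftedAugmented (A : Matrix m n R) (τ : R) : Matrix (m ⊕ n) (m ⊕ n) R :=
  fromBlocks ((-τ) • 1) A Aᵀ ((-τ) • 1)

/-- The matrix `diag(I - u uᵀ, I - v vᵀ)`, which for unit vectors `u` and `v` is the orthogonal
projection `Π` deflating the pair `(u, v)`. -/
def deflation (u : m → R) (v : n → R) : Matrix (m ⊕ n) (m ⊕ n) R :=
  fromBlocks (1 - vecMulVec u u) 0 0 (1 - vecMulVec v v)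

theorem isSymm_shiftedAugmented (A : Matrix m n R) (τ : R) : (shiftedAugmented A τ).IsSymm :=
  (isSymm_one.smul _).fromBlocks rfl (isSymm_one.smul _)

theorem isSymm_one_sub_vecMulVec (u : m → R) : (1 - vecMulVec u u).IsSymm :=
  isSymm_one.sub (transpose_vecMulVec u u)

theorem isSymm_deflation (u : m → R) (v : n → R) : (deflation u v).IsSymm :=
  (isSymm_one_sub_vecMulVec u).fromBlocks transpose_zero (isSymm_one_sub_vecMulVec v)

end Symmetry

variable [Fintype m] [Fintype n] [Fintype ι]

theorem exists_eigenvector_of_mul_mul_mulVec_eq_smul {P B : Matrix ι ι R}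
    (hP_symm : P.IsSymm) (hP_idem : IsIdempotentElem P) (hPB : Commute P B) {r x : ι → R}
    (hr : P *ᵥ r = r) {l : R} (hx : (P * B * P) *ᵥ x = l • x) (hxr : x ⬝ᵥ r ≠ 0) :
    ∃ y ≠ 0, P *ᵥ y = y ∧ B *ᵥ y = l • y := by
  refine ⟨P *ᵥ x, fun hPx ↦ hxr ?_, ?_, ?_⟩
  · rw [← hr, dotProduct_mulVec, ← mulVec_transpose, hP_symm.eq, hPx, zero_dotProduct]
  · rw [mulVec_mulVec, hP_idem.eq]
  · have hPPBP : P * (P * B * P) = B * P := by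
      rw [hPB.eq, mul_assoc B, hP_idem.eq, ← mul_assoc, hPB.eq, mul_assoc, hP_idem.eq]
    rw [← mulVec_smul, ← hx, mulVec_mulVec, mulVec_mulVec, hPPBP]

/-- `u` and `v` are left and right singular vectors of `A` for the value `s`, neither normalised
nor required to be nonzero; `s` may have any sign. -/
structure IsSingularTriple (A : Matrix m n R) (s : R) (u : m → R) (v : n → R) : Prop where
  mulVec_right : A *ᵥ v = s • u
  transpose_mulVec_left : Aᵀ *ᵥ u = s • v

namespace IsSingularTriple

variable {A : Matrix m n R} {s t : R} {u a : m → R} {v b : n → R}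

theorem transpose (h : IsSingularTriple A s u v) : IsSingularTriple Aᵀ s v u :=
  ⟨h.transpose_mulVec_left, by rw [transpose_transpose, h.mulVec_right]⟩

theorem mul_dotProduct (h : IsSingularTriple A s u v) (h' : IsSingularTriple A t a b) :
    t * (u ⬝ᵥ a) = s * (v ⬝ᵥ b) := by
  rw [← smul_eq_mul, ← dotProduct_smul, ← h'.mulVec_right, dotProduct_mulVec, ← mulVec_transpose,
    h.transpose_mulVec_left, smul_dotProduct, smul_eq_mul]

theorem sq_eq_sq_of_dotProduct_ne_zero [NoZeroDivisors R] (h : IsSingularTriple A s u v)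
    (h' : IsSingularTriple A t a b) (hua : u ⬝ᵥ a ≠ 0) : t ^ 2 = s ^ 2 := by
  refine sub_eq_zero.mp ((mul_eq_zero.mp ?_).resolve_right hua)
  linear_combination t * h.mul_dotProduct h' + s * h.transpose.mul_dotProduct h'.transpose

theorem mul_mul_transpose {m' n' : Type*} [Fintype m'] [Fintype n'] [DecidableEq m]
    [DecidableEq n] {U : Matrix m' m R} {V : Matrix n' n R} (hU : Uᵀ * U = 1) (hV : Vᵀ * V = 1)
    (h : IsSingularTriple A s u v) :
    IsSingularTriple (U * A * Vᵀ) s (U *ᵥ u) (V *ᵥ v) where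
  mulVec_right := by
    rw [← mulVec_smul, ← h.mulVec_right, mulVec_mulVec, mulVec_mulVec, Matrix.mul_assoc, hV,
      Matrix.mul_one]
  transpose_mulVec_left := by
    rw [← mulVec_smul, ← h.transpose_mulVec_left, mulVec_mulVec, mulVec_mulVec,
      transpose_mul, transpose_mul, transpose_transpose, Matrix.mul_assoc, Matrix.mul_assoc, hU,
      Matrix.mul_one]

end IsSingularTriple

variable [DecidableEq m] [DecidableEq n]

theorem isIdempotentElem_one_sub_vecMulVec {u : m → R} (hu : u ⬝ᵥ u = 1) :
    IsIdempotentElem (1 - vecMulVec u u) := by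
  refine IsIdempotentElem.one_sub ?_
  rw [IsIdempotentElem, vecMulVec_mul_vecMulVec, hu, one_smul]

theorem dotProduct_eq_zero_of_one_sub_vecMulVec_mulVec_eq {u x : m → R} (hu : u ⬝ᵥ u = 1)
    (hx : (1 - vecMulVec u u) *ᵥ x = x) : u ⬝ᵥ x = 0 := by
  have hux : (u ⬝ᵥ x) • u = 0 := by
    simpa [sub_mulVec, vecMulVec_mulVec] using hx
  calc u ⬝ᵥ x = u ⬝ᵥ ((u ⬝ᵥ x) • u) := by rw [dotProduct_smul, hu, smul_eq_mul, mul_one]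
    _ = 0 := by rw [hux, dotProduct_zero]

theorem isIdempotentElem_deflation {u : m → R} {v : n → R} (hu : u ⬝ᵥ u = 1) (hv : v ⬝ᵥ v = 1) :
    IsIdempotentElem (deflation u v) := by
  simp [IsIdempotentElem, deflation, fromBlocks_multiply,
    (isIdempotentElem_one_sub_vecMulVec hu).eq, (isIdempotentElem_one_sub_vecMulVec hv).eq]

theorem dotProduct_eq_zero_of_deflation_mulVec_eq {u : m → R} {v : n → R} (hu : u ⬝ᵥ u = 1)
    (hv : v ⬝ᵥ v = 1) {x : m ⊕ n → R} (hx : deflation u v *ᵥ x = x) :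
    u ⬝ᵥ (x ∘ Sum.inl) = 0 ∧ v ⬝ᵥ (x ∘ Sum.inr) = 0 := by
  rw [deflation, fromBlocks_mulVec] at hx
  exact ⟨dotProduct_eq_zero_of_one_sub_vecMulVec_mulVec_eq hu
      (by simpa using congrArg (· ∘ Sum.inl) hx),
    dotProduct_eq_zero_of_one_sub_vecMulVec_mulVec_eq hv
      (by simpa using congrArg (· ∘ Sum.inr) hx)⟩

theorem isSingularTriple_of_shiftedAugmented_mulVec_eq_smul {A : Matrix m n R} {τ l : R}
    {x : m ⊕ n → R} (hx : shiftedAugmented A τ *ᵥ x = l • x) :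
    IsSingularTriple A (l + τ) (x ∘ Sum.inl) (x ∘ Sum.inr) := by
  rw [shiftedAugmented, fromBlocks_mulVec] at hx
  have hleft : -(τ • x ∘ Sum.inl) + A *ᵥ (x ∘ Sum.inr) = l • (x ∘ Sum.inl) := by
    simpa [smul_mulVec, neg_mulVec, Pi.smul_comp] using congrArg (· ∘ Sum.inl) hx
  have hright : Aᵀ *ᵥ (x ∘ Sum.inl) + -(τ • x ∘ Sum.inr) = l • (x ∘ Sum.inr) := by
    simpa [smul_mulVec, neg_mulVec, Pi.smul_comp] using congrArg (· ∘ Sum.inr) hx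
  constructor
  · rw [add_smul, ← hleft]
    abel
  · rw [add_smul, ← hright]
    abel

theorem IsSingularTriple.commute_deflation_shiftedAugmented {A : Matrix m n R} {s : R}
    {u : m → R} {v : n → R} (h : IsSingularTriple A s u v) (τ : R) :
    Commute (deflation u v) (shiftedAugmented A τ) := by
  have hA : (1 - vecMulVec u u) * A = A * (1 - vecMulVec v v) := by
    rw [Matrix.sub_mul, Matrix.mul_sub, Matrix.one_mul, Matrix.mul_one, vecMulVec_mul,
      mul_vecMulVec, ← mulVec_transpose, h.transpose_mulVec_left, h.mulVec_right,
      smul_vecMulVec, vecMulVec_smul]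
  have hAt : (1 - vecMulVec v v) * Aᵀ = Aᵀ * (1 - vecMulVec u u) := by
    simpa only [transpose_mul, (isSymm_one_sub_vecMulVec _).eq] using
      (congrArg Matrix.transpose hA).symm
  simp [Commute, SemiconjBy, deflation, shiftedAugmented, fromBlocks_multiply, hA, hAt]

end Deflation

section SVD

variable {R : Type*} [CommRing R] {M N : ℕ}

/-- The `M × N` matrix with `σ` on its main diagonal: the factor `Σ` of a singular value
decomposition. -/
def rectDiagonal (M : ℕ) (σ : Fin N → R) : Matrix (Fin M) (Fin N) R :=
  of fun i j ↦ if (i : ℕ) = j then σ j else 0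

/-- `A = U Σ Vᵀ` is a singular value decomposition with full orthogonal factors, except that the
entries `σ i` are neither ordered nor required to be nonnegative. -/
structure IsSVD (A : Matrix (Fin M) (Fin N) R) (U : Matrix (Fin M) (Fin M) R)
    (V : Matrix (Fin N) (Fin N) R) (σ : Fin N → R) : Prop where
  left_orthogonal : Uᵀ * U = 1
  right_orthogonal : Vᵀ * V = 1
  eq_mul : A = U * rectDiagonal M σ * Vᵀ

theorem isSingularTriple_rectDiagonal (hMN : N ≤ M) (σ : Fin N → R) (i : Fin N) :
    IsSingularTriple (rectDiagonal M σ) (σ i) (Pi.single (i.castLE hMN) 1) (Pi.single i 1) := by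
  constructor <;> ext k
  · simp [rectDiagonal, Pi.single_apply, Fin.ext_iff]
  · by_cases hik : i = k
    · simp [rectDiagonal, hik]
    · simp [rectDiagonal, hik, Ne.symm hik, Fin.val_inj]

theorem col_dotProduct_col_self {n : Type*} [Fintype n] [DecidableEq n] {U : Matrix n n R}
    (hU : Uᵀ * U = 1) (k : n) : U.col k ⬝ᵥ U.col k = 1 :=
  (congrFun₂ hU k k).trans (one_apply_eq k)

theorem eq_zero_of_forall_col_dotProduct_eq_zero {n : Type*} [Fintype n] [DecidableEq n]
    {U : Matrix n n R} (hU : Uᵀ * U = 1) {x : n → R} (hx : ∀ k, U.col k ⬝ᵥ x = 0) : x = 0 := by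
  have hUx : Uᵀ *ᵥ x = 0 := funext hx
  rw [← one_mulVec x, ← mul_eq_one_comm.mp hU, ← mulVec_mulVec, hUx, mulVec_zero]

namespace IsSVD

variable {A : Matrix (Fin M) (Fin N) R} {U : Matrix (Fin M) (Fin M) R}
  {V : Matrix (Fin N) (Fin N) R} {σ : Fin N → R}

theorem isSingularTriple (h : IsSVD A U V σ) (hMN : N ≤ M) (i : Fin N) :
    IsSingularTriple A (σ i) (U.col (i.castLE hMN)) (V.col i) := by
  rw [h.eq_mul, ← mulVec_single_one, ← mulVec_single_one]
  exact (isSingularTriple_rectDiagonal hMN σ i).mul_mul_transpose h.left_orthogonal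
    h.right_orthogonal

theorem sq_eq_or_eq_zero_of_orthogonal [IsDomain R] (h : IsSVD A U V σ) (hMN : N ≤ M)
    {κ : Fin N} {t : R} {a : Fin M → R} {b : Fin N → R} (hab : IsSingularTriple A t a b)
    (ha : U.col (κ.castLE hMN) ⬝ᵥ a = 0) (hb : V.col κ ⬝ᵥ b = 0) (hne : a ≠ 0 ∨ b ≠ 0) :
    (∃ i ≠ κ, t ^ 2 = σ i ^ 2) ∨ (t = 0 ∧ N < M) := by
  by_cases hu : ∃ i : Fin N, U.col (i.castLE hMN) ⬝ᵥ a ≠ 0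
  · obtain ⟨i, hi⟩ := hu
    exact .inl ⟨i, fun hiκ ↦ hi (hiκ ▸ ha),
      (h.isSingularTriple hMN i).sq_eq_sq_of_dotProduct_ne_zero hab hi⟩
  by_cases hv : ∃ i : Fin N, V.col i ⬝ᵥ b ≠ 0
  · obtain ⟨i, hi⟩ := hv
    exact .inl ⟨i, fun hiκ ↦ hi (hiκ ▸ hb),
      (h.isSingularTriple hMN i).transpose.sq_eq_sq_of_dotProduct_ne_zero hab.transpose hi⟩
  push Not at hu hv
  have hb0 : b = 0 := eq_zero_of_forall_col_dotProduct_eq_zero h.right_orthogonal hv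
  have ha0 : a ≠ 0 := hne.resolve_right (not_not_intro hb0)
  have hta : t • a = 0 := by rw [← hab.mulVec_right, hb0, mulVec_zero]
  refine .inr ⟨(smul_eq_zero.mp hta).resolve_right ha0, hMN.lt_of_ne ?_⟩
  rintro rfl
  exact ha0 (eq_zero_of_forall_col_dotProduct_eq_zero h.left_orthogonal hu)

theorem sq_eq_or_eq_zero_of_deflated_eigenvector [IsDomain R] (h : IsSVD A U V σ)
    (hMN : N ≤ M) {κ : Fin N} {P : Matrix (Fin M ⊕ Fin N) (Fin M ⊕ Fin N) R}
    (hP : P = deflation (U.col (κ.castLE hMN)) (V.col κ)) {τ l : R} {r x : Fin M ⊕ Fin N → R}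
    (hr : P *ᵥ r = r) (hx : (P * shiftedAugmented A τ * P) *ᵥ x = l • x) (hxr : x ⬝ᵥ r ≠ 0) :
    (∃ i ≠ κ, (l + τ) ^ 2 = σ i ^ 2) ∨ (l + τ = 0 ∧ N < M) := by
  subst hP
  have hu := col_dotProduct_col_self h.left_orthogonal (κ.castLE hMN)
  have hv := col_dotProduct_col_self h.right_orthogonal κ
  obtain ⟨y, hy0, hPy, hBy⟩ := exists_eigenvector_of_mul_mul_mulVec_eq_smul
    (isSymm_deflation _ _) (isIdempotentElem_deflation hu hv)
    ((h.isSingularTriple hMN κ).commute_deflation_shiftedAugmented τ) hr hx hxr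
  obtain ⟨hyu, hyv⟩ := dotProduct_eq_zero_of_deflation_mulVec_eq hu hv hPy
  refine h.sq_eq_or_eq_zero_of_orthogonal hMN
    (isSingularTriple_of_shiftedAugmented_mulVec_eq_smul hBy) hyu hyv ?_
  by_contra! hy
  exact hy0 (funext (Sum.rec (congrFun hy.1) (congrFun hy.2)))

end IsSVD

end SVD

theorem eq_of_isLeast_range_of_forall_ne_lt {ι α : Type*} [Preorder α] {f : ι → α} {a : α} {k : ι}
    (ha : IsLeast (Set.range f) a) (hk : ∀ i ≠ k, a < f i) : f k = a := by
  obtain ⟨i, rfl⟩ := ha.1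
  by_contra hne
  exact (hk i fun hik ↦ hne (by rw [hik])).false

theorem minres_bound_exact_smallest_general {M N : ℕ} (hMN : N ≤ M)
    {A : Matrix (Fin M) (Fin N) ℝ} {U : Matrix (Fin M) (Fin M) ℝ} {V : Matrix (Fin N) (Fin N) ℝ}
    {σ : Fin N → ℝ} (hA : IsSVD A U V σ) (κ : Fin N) {τ α β : ℝ} (hτ : 0 < τ) (hτα : τ < α)
    (hαβ : α ≤ β) (hσ : ∀ i ≠ κ, σ i ∈ Set.Icc α β)
    {P : Matrix (Fin M ⊕ Fin N) (Fin M ⊕ Fin N) ℝ}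
    (hP : P = deflation (U.col (κ.castLE hMN)) (V.col κ))
    {r : Fin M ⊕ Fin N → ℝ} (hr : P *ᵥ r = r) {j : ℕ} (hj : min 1 (M - N) ≤ j) :
    ∃ w ∈ Krylov (P * shiftedAugmented A τ * P) r j,
      vnorm ((P * shiftedAugmented A τ * P) *ᵥ w + r) ≤
        2 * (β / τ) ^ min 1 (M - N) *
          (1 - 2 / (1 + √((β ^ 2 - τ ^ 2) / (α ^ 2 - τ ^ 2)))) ^
            ((j - min 1 (M - N)) / 2) * vnorm r := by
  obtain ⟨p, hp, hp_neg, hp_bound⟩ :=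
    exists_residualPolynomial_abs_eval_le_of_shift hτ hτα hαβ hj
  obtain ⟨w, hw, hw_eq⟩ := hp.exists_mem_Krylov (P * shiftedAugmented A τ * P) r
  have hα : |α - τ + τ| = α := by rw [sub_add_cancel, abs_of_pos (hτ.trans hτα)]
  have hbound_nonneg := (abs_nonneg _).trans (hp_bound (α - τ) (by rw [hα]; exact ⟨le_rfl, hαβ⟩))
  have hP_symm : P.IsSymm := hP ▸ isSymm_deflation _ _
  have hB₁_symm : (P * shiftedAugmented A τ * P).IsSymm := by
    rw [IsSymm, transpose_mul, transpose_mul, hP_symm.eq, (isSymm_shiftedAugmented A τ).eq,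
      Matrix.mul_assoc]
  refine ⟨w, hw, hw_eq ▸ vnorm_aeval_mulVec_le hB₁_symm p r hbound_nonneg fun l x hx hxr ↦ ?_⟩
  rcases hA.sq_eq_or_eq_zero_of_deflated_eigenvector hMN hP hr hx hxr with
    ⟨i, hi, hsq⟩ | ⟨hl, hNM⟩
  · have habs : |l + τ| = σ i := by
      rw [(sq_eq_sq_iff_abs_eq_abs _ _).mp hsq, abs_of_pos ((hτ.trans hτα).trans_le (hσ i hi).1)]
    exact hp_bound l (habs ▸ hσ i hi)
  · rwa [eq_neg_of_add_eq_zero_left hl, hp_neg (by omega), abs_zero]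

/-- Theorem 3.3(ii). MINRES bound for the JDSVD correction equation with
exact singular vectors, in the case `σ_min ≤ τ < (σ_min + σ_min,2)/2`. -/
theorem minres_bound_exact_smallest {M N : ℕ} (hN : 2 ≤ N) (hMN : N ≤ M)
    (A : Matrix (Fin M) (Fin N) ℝ)
    (U : Matrix (Fin M) (Fin M) ℝ) (V : Matrix (Fin N) (Fin N) ℝ)
    (hU : Uᵀ * U = 1) (hV : Vᵀ * V = 1)
    (σ : Fin N → ℝ) (hσ : ∀ i, 0 ≤ σ i)
    (S : Matrix (Fin M) (Fin N) ℝ)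
    (hS : ∀ i j, S i j = if (i : ℕ) = (j : ℕ) then σ j else 0)
    (hA : A = U * S * Vᵀ)
    (τ : ℝ) (hτ0 : 0 < τ)
    (hclosest : ∀ i : Fin N, i ≠ ⟨0, by omega⟩ → |σ ⟨0, by omega⟩ - τ| < |σ i - τ|)
    (σmax σmin σmin2 : ℝ)
    (hσmax : IsGreatest (Set.range σ) σmax)
    (hσmin : IsLeast (Set.range σ) σmin)
    (hσmin2 : IsLeast (σ '' {i : Fin N | i ≠ ⟨0, by omega⟩}) σmin2)
    (hτ1 : σmin ≤ τ) (hτ2 : τ < (σmin + σmin2) / 2)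
    (u1 : Fin M → ℝ) (hu1 : u1 = fun i => U i ⟨0, by omega⟩)
    (v1 : Fin N → ℝ) (hv1 : v1 = fun i => V i ⟨0, by omega⟩)
    (B P B1 : Matrix (Fin M ⊕ Fin N) (Fin M ⊕ Fin N) ℝ)
    (hB : B = Matrix.fromBlocks ((-τ) • 1) A Aᵀ ((-τ) • 1))
    (hP : P = Matrix.fromBlocks (1 - vecMulVec u1 u1) 0 0 (1 - vecMulVec v1 v1))
    (hB1 : B1 = P * B * P)
    (r : Fin M ⊕ Fin N → ℝ) (hr : P *ᵥ r = r) :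
    σ ⟨0, by omega⟩ = σmin ∧
    ∀ j : ℕ, min 1 (M - N) ≤ j → ∃ w ∈ Krylov B1 r j,
      vnorm (B1 *ᵥ w + r) ≤
        2 * (σmax / τ) ^ (min 1 (M - N)) *
          (1 - 2 / (1 + Real.sqrt ((σmax ^ 2 - τ ^ 2) / (σmin2 ^ 2 - τ ^ 2)))) ^
            ((j - min 1 (M - N)) / 2) * vnorm r := by
  have hσmin2_le (i : Fin N) (hi : i ≠ ⟨0, by omega⟩) : σmin2 ≤ σ i := hσmin2.2 ⟨i, hi, rfl⟩
  have hle_σmax (i : Fin N) : σ i ≤ σmax := hσmax.2 ⟨i, rfl⟩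
  have hσmin2_le_σmax : σmin2 ≤ σmax := by
    obtain ⟨i, -, rfl⟩ := hσmin2.1
    exact hle_σmax i
  have hS' : S = rectDiagonal M σ := Matrix.ext hS
  have hsvd : IsSVD A U V σ := ⟨hU, hV, hS' ▸ hA⟩
  subst hB1 hB hu1 hv1
  refine ⟨eq_of_isLeast_range_of_forall_ne_lt hσmin fun i hi ↦ ?_, fun j hj ↦ ?_⟩
  · linarith [hσmin2_le i hi]
  · exact minres_bound_exact_smallest_general hMN hsvd ⟨0, by omega⟩ hτ0 (by linarith)
      hσmin2_le_σmax (fun i hi ↦ ⟨hσmin2_le i hi, hle_σmax i⟩) hP hr hj
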